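/- Let α ∈ (0,1) and β > β*(α), where β*(α) = (2/(1−α))·arctanh(t*)/t* and t* ∈ (0,1) is the unique solution of (1−t²)·arctanh(t)/t = (1−α)/(1+α). Then G_{α,β} has exactly four local maximizers on [−1,1]²: the two global maximizers (m_g,m_g) and (−m_g,−m_g), where m_g is the unique positive solution of m = tanh((β/2)(1+α)m), and the two anti-symmetric local maximizers (m_l,−m_l) and (−m_l,m_l), where m_l is the unique positive solution of m = tanh((β/2)(1−α)m); at each of these four points the Hessian of G_{α,β} is negative definite. -/

import Mathlib

open Filter

noncomputable section

/-- `E_α(m)`. -/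
def Ebil (a : ℝ) (m : ℝ × ℝ) : ℝ := (m.1 ^ 2 + m.2 ^ 2) / 4 + (a / 2) * m.1 * m.2

/-- One-dimensional entropy term. -/
def entI (x : ℝ) : ℝ :=
  ((1 + x) / 2) * Real.log ((1 + x) / 2) + ((1 - x) / 2) * Real.log ((1 - x) / 2)

/-- Free energy functional `G_{α,β}`. -/
def Gfun (a β : ℝ) (m : ℝ × ℝ) : ℝ := β * Ebil a m - (entI m.1 + entI m.2)

/-- Inverse hyperbolic tangent. -/
def arctanh (x : ℝ) : ℝ := (1 / 2) * Real.log ((1 + x) / (1 - x))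

/-- The Hessian matrix of `G_{α,β}` at `m`. -/
def hessG (a β : ℝ) (m : ℝ × ℝ) : Matrix (Fin 2) (Fin 2) ℝ :=
  !![β / 2 - 1 / (1 - m.1 ^ 2), β * a / 2; β * a / 2, β / 2 - 1 / (1 - m.2 ^ 2)]

/-- The square `[−1,1]²`. -/
def box : Set (ℝ × ℝ) := Set.Icc (-1 : ℝ) 1 ×ˢ Set.Icc (-1 : ℝ) 1

/-! Write `q = β/2·(1 + α)` and `p = β/2·(1 − α)`. At a critical point `(x, y)` the sum and the
difference of the two equations read `artanh x + artanh y = q (x + y)` and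
`artanh x − artanh y = p (x − y)`. If `x ≠ ±y`, the addition formula for `artanh` and
`u² < u · artanh u` give `q (1 + xy) > 1` and `p (1 − xy) > 1`, and then the second variation in the
direction `(y (1 − x²), −x (1 − y²))` is positive. So a local maximizer lies on the diagonal or the
antidiagonal, where the critical equation is `artanh x = k x`; as `artanh x / x` is strictly
increasing on `(0, 1)`, its only solutions are `0` and one pair `±m`. The origin is a saddle or a
minimum because `q > 1`, and the boundary is excluded because `artanh` is infinite there. At
`±(m_l, −m_l)` the Hessian is negative definite exactly when `q (1 − m_l²) < 1`, which `β > β*`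
provides: `β > β*` means `t* < m_l`, and `(1 − t²) · artanh t / t` is strictly decreasing. -/

section

open Set Topology Matrix Real

/-- The gradient of `G_{α,β}` in the open square, where `I'` is the inverse hyperbolic tangent. -/
def gradG (a β : ℝ) (m : ℝ × ℝ) : ℝ × ℝ :=
  (β / 2 * (m.1 + a * m.2) - artanh m.1, β / 2 * (m.2 + a * m.1) - artanh m.2)

lemma eventually_quadratic_le {f f' : ℝ → ℝ} {x c d : ℝ}
    (hf : ∀ᶠ s in 𝓝 x, HasDerivAt f (f' s) s) (hf' : HasDerivAt f' d x) (hcd : c < d) :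
    ∀ᶠ s in 𝓝 x, f x + f' x * (s - x) + c / 2 * (s - x) ^ 2 ≤ f s := by
  set g : ℝ → ℝ := fun s ↦ f s - (f' x * (s - x) + c / 2 * (s - x) ^ 2)
  have hg : ∀ᶠ s in 𝓝 x, HasDerivAt g (f' s - (f' x + c * (s - x))) s := by
    filter_upwards [hf] with s hs
    have hid := (hasDerivAt_id' s).sub_const x
    refine (hs.sub ((hid.const_mul (f' x)).add ((hid.pow 2).const_mul (c / 2)))).congr_deriv ?_
    simp only [Nat.cast_ofNat]
    ring
  have hg' : HasDerivAt (fun s ↦ f' s - (f' x + c * (s - x))) (d - c) x := by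
    refine (hf'.sub ((((hasDerivAt_id' x).sub_const x).const_mul c).const_add
      (f' x))).congr_deriv ?_
    ring
  have hderiv : deriv g =ᶠ[𝓝 x] fun s ↦ f' s - (f' x + c * (s - x)) := hg.mono fun s hs ↦ hs.deriv
  have hmin : IsLocalMin g x := by
    refine isLocalMin_of_deriv_deriv_pos ?_ ?_ hg.self_of_nhds.continuousAt
    · rw [hderiv.deriv_eq, hg'.deriv]
      exact sub_pos.2 hcd
    · rw [hderiv.self_of_nhds]
      ring
  filter_upwards [hmin] with s hs
  simp only [g, sub_self] at hs
  linarith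

lemma second_deriv_nonpos_of_isLocalMax {f f' : ℝ → ℝ} {x d : ℝ} (h : IsLocalMax f x)
    (hf : ∀ᶠ s in 𝓝 x, HasDerivAt f (f' s) s) (hf' : HasDerivAt f' d x) : d ≤ 0 := by
  by_contra! hd
  have hzero : f' x = 0 := h.hasDerivAt_eq_zero hf.self_of_nhds
  have heq : ∀ᶠ s in 𝓝 x, s = x := by
    filter_upwards [h, eventually_quadratic_le hf hf' (half_lt_self hd)] with s hle hge
    rw [hzero] at hge
    have hsq : d * (s - x) ^ 2 ≤ 0 := by linarith
    exact sub_eq_zero.1 (sq_nonpos_iff _ |>.1 (nonpos_of_mul_nonpos_right hsq hd))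
  obtain ⟨s, rfl, hne⟩ :=
    ((heq.filter_mono nhdsWithin_le_nhds).and (self_mem_nhdsWithin (s := {x}ᶜ))).exists
  exact hne rfl

lemma not_isLocalMaxOn_Iic_of_deriv_neg {f : ℝ → ℝ} {b : ℝ} (hf : ContinuousWithinAt f (Iic b) b)
    (hneg : ∀ᶠ t in 𝓝[<] b, deriv f t < 0) : ¬ IsLocalMaxOn f (Iic b) b := by
  intro hmax
  obtain ⟨a, hab, hderiv⟩ := (mem_nhdsLT_iff_exists_Ico_subset).1 hneg
  have hcont : ContinuousOn f (Icc a b) := by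
    intro t ht
    rcases ht.2.eq_or_lt with rfl | htb
    · exact hf.mono Icc_subset_Iic_self
    · exact (differentiableAt_of_deriv_ne_zero (hderiv ⟨ht.1, htb⟩).ne).continuousAt
        |>.continuousWithinAt
  have hanti : StrictAntiOn f (Icc a b) := by
    refine strictAntiOn_of_deriv_neg (convex_Icc a b) hcont fun t ht ↦ ?_
    rw [interior_Icc] at ht
    exact hderiv ⟨ht.1.le, ht.2⟩
  obtain ⟨t, hle, ht⟩ := ((hmax.filter_mono (nhdsWithin_mono b Iio_subset_Iic_self)).and
    (Ioo_mem_nhdsLT hab)).exists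
  exact (hanti ⟨ht.1.le, ht.2.le⟩ (right_mem_Icc.2 (mem_Iio.1 hab).le) ht.2).not_ge hle

open scoped MatrixOrder in
lemma exists_pos_posSemidef_sub_smul_one {n : Type*} [Finite n] [DecidableEq n] [Nonempty n]
    {M : Matrix n n ℝ} (hM : M.PosDef) : ∃ δ : ℝ, 0 < δ ∧ (M - δ • 1).PosSemidef := by
  cases nonempty_fintype n
  have hpos := isStrictlyPositive_iff_posDef.2 hM
  obtain ⟨δ, hδ, hle⟩ :=
    (CFC.exists_pos_algebraMap_le_iff hpos.isSelfAdjoint).2 fun _ ↦ hpos.spectrum_pos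
  exact ⟨δ, hδ, by rwa [Algebra.algebraMap_eq_smul_one, le_iff] at hle⟩

lemma Ioo_zero_one_subset : Ioo (0 : ℝ) 1 ⊆ Ioo (-1) 1 := Ioo_subset_Ioo_left (by norm_num)

lemma neg_mem_Ioo_neg_one_one {x : ℝ} (hx : x ∈ Ioo (-1 : ℝ) 1) : -x ∈ Ioo (-1 : ℝ) 1 :=
  ⟨neg_lt_neg hx.2, neg_lt.1 hx.1⟩

lemma one_sub_sq_pos {x : ℝ} (hx : x ∈ Ioo (-1 : ℝ) 1) : 0 < 1 - x ^ 2 :=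
  sub_pos.2 ((sq_lt_one_iff_abs_lt_one x).2 (abs_lt.2 hx))

lemma arctanh_eq_artanh {x : ℝ} (hx : x ∈ Ioo (-1 : ℝ) 1) : arctanh x = artanh x :=
  (artanh_eq_half_log (Ioo_subset_Icc_self hx)).symm

lemma artanh_eq_half_log_sub_log {x : ℝ} (hx : x ∈ Ioo (-1 : ℝ) 1) :
    artanh x = 1 / 2 * (log (1 + x) - log (1 - x)) := by
  rw [artanh_eq_half_log (Ioo_subset_Icc_self hx),
    log_div (by linarith [hx.1]) (by linarith [hx.2])]

lemma odd_artanh : Function.Odd artanh := fun x ↦ by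
  rw [artanh, artanh, sub_neg_eq_add, ← sub_eq_add_neg, ← inv_div (1 + x), sqrt_inv, log_inv]

lemma one_add_mul_pos {x y : ℝ} (hx : x ∈ Ioo (-1 : ℝ) 1) (hy : y ∈ Ioo (-1 : ℝ) 1) :
    0 < 1 + x * y := by
  linarith [mul_pos (neg_lt_iff_pos_add'.1 hx.1) (neg_lt_iff_pos_add'.1 hy.1),
    mul_pos (sub_pos.2 hx.2) (sub_pos.2 hy.2)]

lemma add_div_one_add_mul_mem_Ioo {x y : ℝ} (hx : x ∈ Ioo (-1 : ℝ) 1) (hy : y ∈ Ioo (-1 : ℝ) 1) :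
    (x + y) / (1 + x * y) ∈ Ioo (-1 : ℝ) 1 := by
  have h := one_add_mul_pos hx hy
  constructor
  · rw [lt_div_iff₀ h]
    linarith [mul_pos (neg_lt_iff_pos_add'.1 hx.1) (neg_lt_iff_pos_add'.1 hy.1)]
  · rw [div_lt_one h]
    linarith [mul_pos (sub_pos.2 hx.2) (sub_pos.2 hy.2)]

lemma artanh_add_artanh {x y : ℝ} (hx : x ∈ Ioo (-1 : ℝ) 1) (hy : y ∈ Ioo (-1 : ℝ) 1) :
    artanh x + artanh y = artanh ((x + y) / (1 + x * y)) := by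
  have h := (one_add_mul_pos hx hy).ne'
  have hxp : 1 + x ≠ 0 := by linarith [hx.1]
  have hyp : 1 + y ≠ 0 := by linarith [hy.1]
  have hxm : 1 - x ≠ 0 := by linarith [hx.2]
  have hym : 1 - y ≠ 0 := by linarith [hy.2]
  have hp : 1 + (x + y) / (1 + x * y) = (1 + x) * (1 + y) / (1 + x * y) := by field
  have hm : 1 - (x + y) / (1 + x * y) = (1 - x) * (1 - y) / (1 + x * y) := by field
  rw [artanh_eq_half_log_sub_log hx, artanh_eq_half_log_sub_log hy,
    artanh_eq_half_log_sub_log (add_div_one_add_mul_mem_Ioo hx hy), hp, hm,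
    log_div (mul_ne_zero hxp hyp) h, log_div (mul_ne_zero hxm hym) h, log_mul hxp hyp,
    log_mul hxm hym]
  ring

lemma hasDerivAt_artanh {x : ℝ} (hx : x ∈ Ioo (-1 : ℝ) 1) :
    HasDerivAt artanh (1 / (1 - x ^ 2)) x := by
  have hlog : artanh =ᶠ[𝓝 x] fun y ↦ 1 / 2 * (log (1 + y) - log (1 - y)) := by
    filter_upwards [Ioo_mem_nhds hx.1 hx.2] with y hy using artanh_eq_half_log_sub_log hy
  have hp : 1 + x ≠ 0 := by linarith [hx.1]
  have hm : 1 - x ≠ 0 := by linarith [hx.2]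
  have hq : 1 - x ^ 2 ≠ 0 := (one_sub_sq_pos hx).ne'
  refine HasDerivAt.congr_of_eventuallyEq ?_ hlog
  refine (((((hasDerivAt_id' x).const_add 1).log hp).sub
    (((hasDerivAt_id' x).const_sub 1).log hm)).const_mul (1 / 2 : ℝ)).congr_deriv ?_
  field

lemma tendsto_artanh_nhdsLT_one : Tendsto artanh (𝓝[<] 1) atTop := by
  refine tendsto_atTop.2 fun K ↦ ?_
  filter_upwards [Ioo_mem_nhdsLT (tanh_lt_one K)] with t ht
  rw [← artanh_tanh K]
  exact artanh_le_artanh (neg_one_lt_tanh K) ht.2 ht.1.le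

lemma artanh_lt_div_one_sub_sq {x : ℝ} (hx : x ∈ Ioo (0 : ℝ) 1) :
    artanh x < x / (1 - x ^ 2) := by
  have hx' := Ioo_zero_one_subset hx
  have hsinh : 2 * artanh x < sinh (2 * artanh x) :=
    self_lt_sinh_iff.2 (by linarith [artanh_pos hx])
  rw [sinh_two_mul, sinh_artanh hx', cosh_artanh hx', mul_assoc, div_mul_div_comm, mul_one,
    mul_self_sqrt (one_sub_sq_pos hx').le] at hsinh
  linarith

lemma self_lt_artanh {x : ℝ} (hx : x ∈ Ioo (0 : ℝ) 1) : x < artanh x := by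
  have hmono : StrictMonoOn (fun t ↦ artanh t - t) (Ico 0 1) := by
    have hderiv : ∀ t ∈ Ico (0 : ℝ) 1,
        HasDerivAt (fun t ↦ artanh t - t) (1 / (1 - t ^ 2) - 1) t := fun t ht ↦
      (hasDerivAt_artanh ⟨neg_one_lt_zero.trans_le ht.1, ht.2⟩).sub (hasDerivAt_id' t)
    refine strictMonoOn_of_deriv_pos (convex_Ico 0 1)
      (fun t ht ↦ (hderiv t ht).continuousAt.continuousWithinAt) fun t ht ↦ ?_
    rw [interior_Ico] at ht
    rw [(hderiv t ⟨ht.1.le, ht.2⟩).deriv, sub_pos]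
    exact one_lt_one_div (one_sub_sq_pos (Ioo_zero_one_subset ht)) (by nlinarith [ht.1])
  have h := hmono (left_mem_Ico.2 one_pos) ⟨hx.1.le, hx.2⟩ hx.1
  simpa using h

lemma strictMonoOn_artanh_div : StrictMonoOn (fun t ↦ artanh t / t) (Ioo 0 1) := by
  have hderiv : ∀ t ∈ Ioo (0 : ℝ) 1, HasDerivAt (fun t ↦ artanh t / t)
      ((1 / (1 - t ^ 2) * t - artanh t * 1) / t ^ 2) t := fun t ht ↦
    (hasDerivAt_artanh (Ioo_zero_one_subset ht)).div (hasDerivAt_id' t) ht.1.ne'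
  refine strictMonoOn_of_deriv_pos (convex_Ioo 0 1)
    (fun t ht ↦ (hderiv t ht).continuousAt.continuousWithinAt) fun t ht ↦ ?_
  rw [interior_Ioo] at ht
  rw [(hderiv t ht).deriv, one_div_mul_eq_div, mul_one]
  exact div_pos (sub_pos.2 (artanh_lt_div_one_sub_sq ht)) (pow_pos ht.1 2)

lemma strictAntiOn_one_sub_sq_mul_artanh_div :
    StrictAntiOn (fun t ↦ (1 - t ^ 2) * artanh t / t) (Ioo 0 1) := by
  have hderiv : ∀ t ∈ Ioo (0 : ℝ) 1, HasDerivAt (fun t ↦ (1 - t ^ 2) * artanh t / t)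
      ((t - (1 + t ^ 2) * artanh t) / t ^ 2) t := by
    intro t ht
    have ht' := Ioo_zero_one_subset ht
    have hq := (one_sub_sq_pos ht').ne'
    have ht0 := ht.1.ne'
    refine ((((hasDerivAt_pow 2 t).const_sub 1).mul (hasDerivAt_artanh ht')).div
      (hasDerivAt_id' t) ht0).congr_deriv ?_
    simp only [Pi.mul_apply, Nat.cast_ofNat]
    field
  refine strictAntiOn_of_deriv_neg (convex_Ioo 0 1)
    (fun t ht ↦ (hderiv t ht).continuousAt.continuousWithinAt) fun t ht ↦ ?_
  rw [interior_Ioo] at ht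
  rw [(hderiv t ht).deriv]
  have hlt := self_lt_artanh ht
  have hnum : t - (1 + t ^ 2) * artanh t < 0 := by
    linarith [mul_nonneg (sq_nonneg t) (artanh_pos ht).le]
  exact div_neg_of_neg_of_pos hnum (pow_pos ht.1 2)

lemma one_lt_of_artanh_eq_mul {k x : ℝ} (hx : x ∈ Ioo (-1 : ℝ) 1) (hx0 : x ≠ 0)
    (h : artanh x = k * x) : 1 < k := by
  wlog hpos : 0 < x generalizing x
  · have hneg : 0 < -x := by linarith [lt_of_le_of_ne (not_lt.1 hpos) hx0]
    exact this (x := -x) (neg_mem_Ioo_neg_one_one hx) hneg.ne' (by rw [odd_artanh, h]; ring) hneg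
  have hlt := self_lt_artanh ⟨hpos, hx.2⟩
  rw [h] at hlt
  exact (lt_mul_iff_one_lt_left hpos).1 hlt

lemma lt_one_div_one_sub_sq_of_artanh_eq_mul {k x : ℝ} (hx : x ∈ Ioo (0 : ℝ) 1)
    (h : artanh x = k * x) : k < 1 / (1 - x ^ 2) := by
  have hlt := artanh_lt_div_one_sub_sq hx
  rw [h, ← one_div_mul_eq_div] at hlt
  exact lt_of_mul_lt_mul_right hlt hx.1.le

lemma eq_zero_or_eq_or_eq_neg_of_artanh_eq_mul {k m x : ℝ} (hm : m ∈ Ioo (0 : ℝ) 1)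
    (hmk : artanh m = k * m) (hx : x ∈ Ioo (-1 : ℝ) 1) (hxk : artanh x = k * x) :
    x = 0 ∨ x = m ∨ x = -m := by
  have hpos : ∀ {t : ℝ}, t ∈ Ioo (0 : ℝ) 1 → artanh t = k * t → t = m := fun {t} ht htk ↦
    strictMonoOn_artanh_div.injOn ht hm <| by
      simp only [htk, hmk, mul_div_cancel_right₀ _ ht.1.ne', mul_div_cancel_right₀ _ hm.1.ne']
  rcases lt_trichotomy x 0 with hx0 | hx0 | hx0
  · have := hpos (t := -x) ⟨by linarith, by linarith [hx.1]⟩ (by rw [odd_artanh, hxk]; ring)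
    exact Or.inr (Or.inr (by linarith))
  · exact Or.inl hx0
  · exact Or.inr (Or.inl (hpos ⟨hx0, hx.2⟩ hxk))

lemma one_lt_mul_one_add_mul {k x y : ℝ} (hx : x ∈ Ioo (-1 : ℝ) 1) (hy : y ∈ Ioo (-1 : ℝ) 1)
    (hxy : x + y ≠ 0) (h : artanh x + artanh y = k * (x + y)) : 1 < k * (1 + x * y) := by
  have hpos := one_add_mul_pos hx hy
  refine one_lt_of_artanh_eq_mul (add_div_one_add_mul_mem_Ioo hx hy)
    (div_ne_zero hxy hpos.ne') ?_
  rw [← artanh_add_artanh hx hy, h, mul_assoc, mul_div_cancel₀ _ hpos.ne']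

lemma entI_eq_neg_binEntropy (x : ℝ) : entI x = -binEntropy ((1 + x) / 2) := by
  rw [entI, binEntropy, log_inv, log_inv, show 1 - (1 + x) / 2 = (1 - x) / 2 by ring]
  ring

lemma continuous_entI : Continuous entI := by
  simp only [funext entI_eq_neg_binEntropy]
  fun_prop

lemma entI_neg (x : ℝ) : entI (-x) = entI x := by
  rw [entI, entI, sub_neg_eq_add, ← sub_eq_add_neg, add_comm]

lemma hasDerivAt_entI {x : ℝ} (hx : x ∈ Ioo (-1 : ℝ) 1) : HasDerivAt entI (artanh x) x := by
  have hp : 1 + x ≠ 0 := by linarith [hx.1]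
  have hm : 1 - x ≠ 0 := by linarith [hx.2]
  have hbin := hasDerivAt_binEntropy (p := (1 + x) / 2) (by grind) (by grind)
  rw [funext entI_eq_neg_binEntropy]
  refine (hbin.comp x (((hasDerivAt_id' x).const_add 1).div_const 2)).neg.congr_deriv ?_
  rw [artanh_eq_half_log_sub_log hx, show 1 - (1 + x) / 2 = (1 - x) / 2 by ring,
    log_div hp two_ne_zero, log_div hm two_ne_zero]
  ring

lemma mem_interior_box {m : ℝ × ℝ} :
    m ∈ interior box ↔ m.1 ∈ Ioo (-1 : ℝ) 1 ∧ m.2 ∈ Ioo (-1 : ℝ) 1 := by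
  rw [box, interior_prod_eq, interior_Icc, mem_prod]

lemma swap_mem_box {m : ℝ × ℝ} (hm : m ∈ box) : m.swap ∈ box := ⟨hm.2, hm.1⟩

lemma neg_mem_box {m : ℝ × ℝ} (hm : m ∈ box) : -m ∈ box :=
  ⟨⟨neg_le_neg hm.1.2, neg_le.1 hm.1.1⟩, neg_le_neg hm.2.2, neg_le.1 hm.2.1⟩

lemma isHermitian_hessG (a β : ℝ) (m : ℝ × ℝ) : (hessG a β m).IsHermitian := by
  ext i j
  fin_cases i <;> fin_cases j <;> rfl

lemma dotProduct_hessG_mulVec (a β : ℝ) (m : ℝ × ℝ) (v : Fin 2 → ℝ) :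
    v ⬝ᵥ hessG a β m *ᵥ v = β / 2 * (v 0 ^ 2 + v 1 ^ 2) + β * a * (v 0 * v 1) -
      (v 0 ^ 2 / (1 - m.1 ^ 2) + v 1 ^ 2 / (1 - m.2 ^ 2)) := by
  simp only [hessG, dotProduct, mulVec, Fin.sum_univ_two, of_apply, cons_val_zero, cons_val_one,
    cons_val', cons_val_fin_one]
  ring

variable {a β : ℝ}

lemma Gfun_swap (m : ℝ × ℝ) : Gfun a β m.swap = Gfun a β m := by
  simp only [Gfun, Ebil, Prod.fst_swap, Prod.snd_swap]
  ring

lemma Gfun_neg (m : ℝ × ℝ) : Gfun a β (-m) = Gfun a β m := by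
  simp only [Gfun, Ebil, Prod.fst_neg, Prod.snd_neg, entI_neg]
  ring

lemma Gfun_diag_sub_Gfun_antidiag (x : ℝ) :
    Gfun a β (x, x) - Gfun a β (x, -x) = β * a * x ^ 2 := by
  simp only [Gfun, Ebil, entI_neg]
  ring

lemma continuous_Gfun : Continuous (Gfun a β) := by
  have := continuous_entI
  unfold Gfun Ebil
  fun_prop

lemma isLocalMaxOn_Gfun_swap {m : ℝ × ℝ} (hm : m ∈ box) (h : IsLocalMaxOn (Gfun a β) box m) :
    IsLocalMaxOn (Gfun a β) box m.swap := by
  have := IsLocalMaxOn.comp_continuousOn (g := Prod.swap) (b := m.swap) (s := box) h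
    (fun _ ↦ swap_mem_box) continuous_swap.continuousOn (swap_mem_box hm)
  rwa [funext Gfun_swap (f := Gfun a β ∘ Prod.swap)] at this

lemma isLocalMaxOn_Gfun_neg {m : ℝ × ℝ} (hm : m ∈ box) (h : IsLocalMaxOn (Gfun a β) box m) :
    IsLocalMaxOn (Gfun a β) box (-m) := by
  have := IsLocalMaxOn.comp_continuousOn (g := fun z ↦ -z) (b := -m) (s := box)
    (by rwa [neg_neg]) (fun _ ↦ neg_mem_box) continuous_neg.continuousOn (neg_mem_box hm)
  rwa [funext Gfun_neg (f := Gfun a β ∘ fun z ↦ -z)] at this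

lemma gradG_diag_eq_zero_iff {x : ℝ} :
    gradG a β (x, x) = 0 ↔ artanh x = β / 2 * (1 + a) * x := by
  simp only [gradG, Prod.mk_eq_zero, and_self, sub_eq_zero]
  grind

lemma gradG_antidiag_eq_zero_iff {x : ℝ} :
    gradG a β (x, -x) = 0 ↔ artanh x = β / 2 * (1 - a) * x := by
  simp only [gradG, Prod.mk_eq_zero, odd_artanh x]
  grind

lemma hasDerivAt_Gfun_fst {x : ℝ} (hx : x ∈ Ioo (-1 : ℝ) 1) (y : ℝ) :
    HasDerivAt (fun s ↦ Gfun a β (s, y)) (gradG a β (x, y)).1 x := by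
  have hid := hasDerivAt_id' x
  refine ((((((hid.pow 2).add_const (y ^ 2)).div_const 4).add
    ((hid.const_mul (a / 2)).mul_const y)).const_mul β).sub
    ((hasDerivAt_entI hx).add_const (entI y))).congr_deriv ?_
  simp only [gradG, Nat.cast_ofNat]
  ring

lemma hasDerivAt_Gfun_line {x y v w t : ℝ} (ht : (x + t * v, y + t * w) ∈ interior box) :
    HasDerivAt (fun s ↦ Gfun a β (x + s * v, y + s * w))
      ((gradG a β (x + t * v, y + t * w)).1 * v + (gradG a β (x + t * v, y + t * w)).2 * w) t := by
  obtain ⟨hx, hy⟩ := mem_interior_box.1 ht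
  have dx : HasDerivAt (fun s ↦ x + s * v) v t := by
    simpa using ((hasDerivAt_id' t).mul_const v).const_add x
  have dy : HasDerivAt (fun s ↦ y + s * w) w t := by
    simpa using ((hasDerivAt_id' t).mul_const w).const_add y
  refine (((((dx.pow 2).add (dy.pow 2)).div_const 4).add
    ((dx.const_mul (a / 2)).mul dy)).const_mul β |>.sub
    (((hasDerivAt_entI hx).comp t dx).add ((hasDerivAt_entI hy).comp t dy))).congr_deriv ?_
  simp only [gradG, Nat.cast_ofNat]
  ring

lemma hasDerivAt_gradG_line {m : ℝ × ℝ} (hm : m ∈ interior box) (v : Fin 2 → ℝ) :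
    HasDerivAt (fun s ↦ (gradG a β (m.1 + s * v 0, m.2 + s * v 1)).1 * v 0 +
      (gradG a β (m.1 + s * v 0, m.2 + s * v 1)).2 * v 1) (v ⬝ᵥ hessG a β m *ᵥ v) 0 := by
  obtain ⟨hx, hy⟩ := mem_interior_box.1 hm
  have dx : HasDerivAt (fun s ↦ m.1 + s * v 0) (v 0) 0 := by
    simpa using ((hasDerivAt_id' (0 : ℝ)).mul_const (v 0)).const_add m.1
  have dy : HasDerivAt (fun s ↦ m.2 + s * v 1) (v 1) 0 := by
    simpa using ((hasDerivAt_id' (0 : ℝ)).mul_const (v 1)).const_add m.2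
  have ax := (hasDerivAt_artanh hx).comp_of_eq (0 : ℝ) dx (by simp)
  have ay := (hasDerivAt_artanh hy).comp_of_eq (0 : ℝ) dy (by simp)
  refine (((((dx.add (dy.const_mul a)).const_mul (β / 2)).sub ax).mul_const (v 0)).add
    ((((dy.add (dx.const_mul a)).const_mul (β / 2)).sub ay).mul_const (v 1))).congr_deriv ?_
  rw [dotProduct_hessG_mulVec]
  ring

lemma not_isLocalMaxOn_Gfun_one {y : ℝ} (hy : y ∈ Icc (-1 : ℝ) 1) :
    ¬ IsLocalMaxOn (Gfun a β) box (1, y) := by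
  intro hmax
  have hcont : Continuous fun s : ℝ ↦ (s, y) := by fun_prop
  have hsection : IsLocalMaxOn (fun s ↦ Gfun a β (s, y)) (Icc (-1) 1) 1 :=
    IsLocalMaxOn.comp_continuousOn (g := fun s ↦ (s, y)) hmax (fun s hs ↦ ⟨hs, hy⟩)
      hcont.continuousOn (right_mem_Icc.2 (by norm_num))
  rw [IsLocalMaxOn, nhdsWithin_Icc_eq_nhdsLE (by norm_num)] at hsection
  refine not_isLocalMaxOn_Iic_of_deriv_neg (f := fun s ↦ Gfun a β (s, y))
    (continuous_Gfun.comp hcont).continuousWithinAt ?_ hsection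
  have hbound : ContinuousAt (fun t ↦ β / 2 * (t + a * y)) 1 := by fun_prop
  filter_upwards [Ioo_mem_nhdsLT (show (-1 : ℝ) < 1 by norm_num),
    (hbound.tendsto.mono_left nhdsWithin_le_nhds).eventually_lt_const
      (lt_add_one (β / 2 * (1 + a * y))),
    tendsto_artanh_nhdsLT_one.eventually_gt_atTop (β / 2 * (1 + a * y) + 1)] with t ht hlt hgt
  rw [(hasDerivAt_Gfun_fst ht y).deriv]
  exact sub_neg.2 (hlt.trans hgt)

lemma mem_interior_box_of_isLocalMaxOn_Gfun {m : ℝ × ℝ} (hm : m ∈ box)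
    (h : IsLocalMaxOn (Gfun a β) box m) : m ∈ interior box := by
  have hfst_lt : ∀ {z : ℝ × ℝ}, z ∈ box → IsLocalMaxOn (Gfun a β) box z → z.1 < 1 := by
    rintro ⟨x, y⟩ hz hmax
    refine hz.1.2.lt_of_ne ?_
    rintro rfl
    exact not_isLocalMaxOn_Gfun_one hz.2 hmax
  have hfst_mem : ∀ {z : ℝ × ℝ}, z ∈ box → IsLocalMaxOn (Gfun a β) box z → z.1 ∈ Ioo (-1 : ℝ) 1 :=
    fun hz hmax ↦
      ⟨neg_lt.1 (hfst_lt (neg_mem_box hz) (isLocalMaxOn_Gfun_neg hz hmax)), hfst_lt hz hmax⟩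
  exact mem_interior_box.2 ⟨hfst_mem hm h, hfst_mem (swap_mem_box hm) (isLocalMaxOn_Gfun_swap hm h)⟩

lemma eventually_line_mem_interior_box {m : ℝ × ℝ} (hm : m ∈ interior box) (v w : ℝ) :
    ∀ᶠ t in 𝓝 (0 : ℝ), (m.1 + t * v, m.2 + t * w) ∈ interior box := by
  have hcont : Continuous fun t : ℝ ↦ (m.1 + t * v, m.2 + t * w) := by fun_prop
  refine (isOpen_interior.preimage hcont).eventually_mem ?_
  simpa only [mem_preimage, zero_mul, add_zero] using hm

lemma isLocalMax_Gfun_line {m : ℝ × ℝ} (h : IsLocalMax (Gfun a β) m) (v w : ℝ) :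
    IsLocalMax (fun t ↦ Gfun a β (m.1 + t * v, m.2 + t * w)) 0 := by
  have hcont : Continuous fun t : ℝ ↦ (m.1 + t * v, m.2 + t * w) := by fun_prop
  refine IsLocalMax.comp_continuous (f := Gfun a β)
    (g := fun t : ℝ ↦ (m.1 + t * v, m.2 + t * w)) ?_ hcont.continuousAt
  simpa only [zero_mul, add_zero] using h

lemma gradG_eq_zero_of_isLocalMax {m : ℝ × ℝ} (hm : m ∈ interior box)
    (h : IsLocalMax (Gfun a β) m) : gradG a β m = 0 := by
  have hline : ∀ v w, (gradG a β m).1 * v + (gradG a β m).2 * w = 0 := fun v w ↦ by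
    simpa only [zero_mul, add_zero] using (isLocalMax_Gfun_line h v w).hasDerivAt_eq_zero
      (hasDerivAt_Gfun_line (eventually_line_mem_interior_box hm v w).self_of_nhds)
  ext
  · simpa using hline 1 0
  · simpa using hline 0 1

lemma posSemidef_neg_hessG_of_isLocalMax {m : ℝ × ℝ} (hm : m ∈ interior box)
    (h : IsLocalMax (Gfun a β) m) : (-hessG a β m).PosSemidef := by
  refine PosSemidef.of_dotProduct_mulVec_nonneg (isHermitian_hessG a β m).neg fun v ↦ ?_
  rw [star_trivial, neg_mulVec, dotProduct_neg, neg_nonneg]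
  exact second_deriv_nonpos_of_isLocalMax (isLocalMax_Gfun_line h (v 0) (v 1))
    ((eventually_line_mem_interior_box hm (v 0) (v 1)).mono fun t ↦ hasDerivAt_Gfun_line)
    (hasDerivAt_gradG_line hm v)

lemma eq_or_eq_neg_of_posSemidef_neg_hessG {m : ℝ × ℝ} (hm : m ∈ interior box)
    (hgrad : gradG a β m = 0) (hess : (-hessG a β m).PosSemidef) : m.2 = m.1 ∨ m.2 = -m.1 := by
  obtain ⟨x, y⟩ := m
  obtain ⟨hx, hy⟩ := mem_interior_box.1 hm
  dsimp only at hx hy ⊢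
  obtain ⟨hgx, hgy⟩ := Prod.mk_eq_zero.1 hgrad
  dsimp only at hgx hgy
  by_contra! hne
  have hadd : x + y ≠ 0 := fun h ↦ hne.2 (by linarith)
  have hsub : x - y ≠ 0 := fun h ↦ hne.1 (by linarith)
  have hq : 1 < β / 2 * (1 + a) * (1 + x * y) :=
    one_lt_mul_one_add_mul hx hy hadd (by linarith)
  have hp : 1 < β / 2 * (1 - a) * (1 - x * y) := by
    have := one_lt_mul_one_add_mul (k := β / 2 * (1 - a)) hx (neg_mem_Ioo_neg_one_one hy)
      (by rwa [← sub_eq_add_neg]) (by rw [odd_artanh]; linarith)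
    rwa [mul_neg, ← sub_eq_add_neg] at this
  -- `v 0 + v 1 = (y - x) * (1 + x * y)` and `v 0 - v 1 = (x + y) * (1 - x * y)`, to match `hq`
  -- and `hp`.
  set v : Fin 2 → ℝ := ![y * (1 - x ^ 2), -x * (1 - y ^ 2)]
  have hvar := hess.dotProduct_mulVec_nonneg v
  rw [star_trivial, neg_mulVec, dotProduct_neg, neg_nonneg] at hvar
  have hform : v ⬝ᵥ hessG a β (x, y) *ᵥ v =
      ((x - y) ^ 2 * (1 + x * y) * (β / 2 * (1 + a) * (1 + x * y) - 1) +
        (x + y) ^ 2 * (1 - x * y) * (β / 2 * (1 - a) * (1 - x * y) - 1)) / 2 := by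
    rw [dotProduct_hessG_mulVec]
    simp only [v, cons_val_zero, cons_val_one]
    field
  have hplus : 0 < 1 + x * y := one_add_mul_pos hx hy
  have hminus : 0 < 1 - x * y := by
    rw [sub_eq_add_neg, ← mul_neg]
    exact one_add_mul_pos hx (neg_mem_Ioo_neg_one_one hy)
  have := sub_pos.2 hq
  have := sub_pos.2 hp
  exact hvar.not_gt (hform ▸ by positivity)

lemma eventually_entI_ge {x c : ℝ} (hx : x ∈ Ioo (-1 : ℝ) 1) (hc : c < 1 / (1 - x ^ 2)) :
    ∀ᶠ s in 𝓝 x, entI x + artanh x * (s - x) + c / 2 * (s - x) ^ 2 ≤ entI s :=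
  eventually_quadratic_le (mem_of_superset (Ioo_mem_nhds hx.1 hx.2) fun _ ↦ hasDerivAt_entI)
    (hasDerivAt_artanh hx) hc

lemma isLocalMax_Gfun_of_posDef {m : ℝ × ℝ} (hm : m ∈ interior box)
    (hgrad : gradG a β m = 0) (hess : (-hessG a β m).PosDef) : IsLocalMax (Gfun a β) m := by
  obtain ⟨x, y⟩ := m
  obtain ⟨hx, hy⟩ := mem_interior_box.1 hm
  obtain ⟨hgx, hgy⟩ := Prod.mk_eq_zero.1 hgrad
  obtain ⟨δ, hδ, hpsd⟩ := exists_pos_posSemidef_sub_smul_one hess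
  filter_upwards [
    continuousAt_fst.eventually (eventually_entI_ge hx (sub_lt_self _ hδ)),
    continuousAt_snd.eventually (eventually_entI_ge hy (sub_lt_self _ hδ))] with z hz₁ hz₂
  have hquad := hpsd.dotProduct_mulVec_nonneg ![z.1 - x, z.2 - y]
  rw [star_trivial, sub_mulVec, neg_mulVec, smul_mulVec, one_mulVec, dotProduct_sub,
    dotProduct_neg, dotProduct_smul, dotProduct_hessG_mulVec] at hquad
  simp only [dotProduct, Fin.sum_univ_two, cons_val_zero, cons_val_one, smul_eq_mul] at hquad
  dsimp only at hz₁ hz₂ hgx hgy hquad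
  rw [← sub_eq_zero.1 hgx] at hz₁
  rw [← sub_eq_zero.1 hgy] at hz₂
  simp only [Gfun, Ebil]
  linear_combination hz₁ + hz₂ + hquad / 2

lemma posDef_neg_hessG {m : ℝ × ℝ} (hβa : 0 ≤ β * a)
    (h₁ : β / 2 * (1 + a) < 1 / (1 - m.1 ^ 2)) (h₂ : β / 2 * (1 + a) < 1 / (1 - m.2 ^ 2)) :
    (-hessG a β m).PosDef := by
  refine PosDef.of_dotProduct_mulVec_pos (isHermitian_hessG a β m).neg fun v hv ↦ ?_
  have hform : star v ⬝ᵥ -hessG a β m *ᵥ v = (1 / (1 - m.1 ^ 2) - β / 2 * (1 + a)) * v 0 ^ 2 +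
      (1 / (1 - m.2 ^ 2) - β / 2 * (1 + a)) * v 1 ^ 2 + β * a / 2 * (v 0 - v 1) ^ 2 := by
    rw [star_trivial, neg_mulVec, dotProduct_neg, dotProduct_hessG_mulVec]
    ring
  have := sub_pos.2 h₁
  have := sub_pos.2 h₂
  have hne : v 0 ≠ 0 ∨ v 1 ≠ 0 := by
    by_contra! h
    exact hv (funext (Fin.forall_fin_two.2 h))
  rw [hform]
  rcases hne with h | h <;> positivity

lemma not_posSemidef_neg_hessG_zero (h : 1 < β / 2 * (1 + a)) :
    ¬ (-hessG a β 0).PosSemidef := by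
  intro hpsd
  have hvar := hpsd.dotProduct_mulVec_nonneg ![1, 1]
  rw [star_trivial, neg_mulVec, dotProduct_neg, dotProduct_hessG_mulVec] at hvar
  simp only [cons_val_zero, cons_val_one, Prod.fst_zero, Prod.snd_zero] at hvar
  linarith

lemma setOf_isLocalMaxOn_Gfun_subset {mg ml : ℝ} (hmg : mg ∈ Ioo (0 : ℝ) 1)
    (hmg_eq : artanh mg = β / 2 * (1 + a) * mg) (hml : ml ∈ Ioo (0 : ℝ) 1)
    (hml_eq : artanh ml = β / 2 * (1 - a) * ml) :
    {m | m ∈ box ∧ IsLocalMaxOn (Gfun a β) box m} ⊆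
      {(mg, mg), (-mg, -mg), (ml, -ml), (-ml, ml)} := by
  rintro ⟨x, y⟩ ⟨hbox, hmax⟩
  have hint := mem_interior_box_of_isLocalMaxOn_Gfun hbox hmax
  have hlocal := hmax.isLocalMax (mem_interior_iff_mem_nhds.1 hint)
  have hgrad := gradG_eq_zero_of_isLocalMax hint hlocal
  have hess := posSemidef_neg_hessG_of_isLocalMax hint hlocal
  have hx := (mem_interior_box.1 hint).1
  have hzero : x = 0 → y ≠ 0 := by
    rintro rfl rfl
    refine not_posSemidef_neg_hessG_zero ?_ hess
    exact one_lt_of_artanh_eq_mul (Ioo_zero_one_subset hmg) hmg.1.ne' hmg_eq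
  obtain rfl | rfl : y = x ∨ y = -x := eq_or_eq_neg_of_posSemidef_neg_hessG hint hgrad hess
  · rcases eq_zero_or_eq_or_eq_neg_of_artanh_eq_mul hmg hmg_eq hx
      (gradG_diag_eq_zero_iff.1 hgrad) with h | rfl | rfl
    · exact absurd h (hzero h)
    · simp
    · simp
  · rcases eq_zero_or_eq_or_eq_neg_of_artanh_eq_mul hml hml_eq hx
      (gradG_antidiag_eq_zero_iff.1 hgrad) with h | rfl | rfl
    · exact absurd (neg_eq_zero.2 h) (hzero h)
    · simp
    · simp

lemma subset_setOf_isLocalMaxOn_Gfun {mg ml : ℝ} (hmg : mg ∈ Ioo (-1 : ℝ) 1)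
    (hmg_eq : artanh mg = β / 2 * (1 + a) * mg) (hmg_posDef : (-hessG a β (mg, mg)).PosDef)
    (hml : ml ∈ Ioo (-1 : ℝ) 1) (hml_eq : artanh ml = β / 2 * (1 - a) * ml)
    (hml_posDef : (-hessG a β (ml, -ml)).PosDef) :
    {(mg, mg), (-mg, -mg), (ml, -ml), (-ml, ml)} ⊆
      {m | m ∈ box ∧ IsLocalMaxOn (Gfun a β) box m} := by
  have hg_mem : (mg, mg) ∈ interior box := mem_interior_box.2 ⟨hmg, hmg⟩
  have hl_mem : (ml, -ml) ∈ interior box := mem_interior_box.2 ⟨hml, neg_mem_Ioo_neg_one_one hml⟩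
  have hg_box := interior_subset hg_mem
  have hl_box := interior_subset hl_mem
  have hg_max : IsLocalMaxOn (Gfun a β) box (mg, mg) :=
    (isLocalMax_Gfun_of_posDef hg_mem (gradG_diag_eq_zero_iff.2 hmg_eq) hmg_posDef).on box
  have hl_max : IsLocalMaxOn (Gfun a β) box (ml, -ml) :=
    (isLocalMax_Gfun_of_posDef hl_mem (gradG_antidiag_eq_zero_iff.2 hml_eq) hml_posDef).on box
  rintro _ (rfl | rfl | rfl | rfl)
  · exact ⟨hg_box, hg_max⟩
  · rw [← Prod.neg_mk]
    exact ⟨neg_mem_box hg_box, isLocalMaxOn_Gfun_neg hg_box hg_max⟩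
  · exact ⟨hl_box, hl_max⟩
  · exact ⟨swap_mem_box hl_box, isLocalMaxOn_Gfun_swap hl_box hl_max⟩

lemma Gfun_le_Gfun_of_isLocalMaxOn_subset {mg ml : ℝ} (hβa : 0 < β * a) (hml : ml ≠ 0)
    (hsub : {m | m ∈ box ∧ IsLocalMaxOn (Gfun a β) box m} ⊆
      {(mg, mg), (-mg, -mg), (ml, -ml), (-ml, ml)}) {m : ℝ × ℝ} (hm : m ∈ box) :
    Gfun a β m ≤ Gfun a β (mg, mg) := by
  obtain ⟨z, hz, hmax⟩ := (isCompact_Icc.prod isCompact_Icc : IsCompact box).exists_isMaxOn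
    ⟨m, hm⟩ continuous_Gfun.continuousOn
  have hanti : (ml, -ml) ∈ box → Gfun a β (ml, -ml) < Gfun a β z := fun h ↦ by
    have hdiff := Gfun_diag_sub_Gfun_antidiag (a := a) (β := β) ml
    have hdiag : Gfun a β (ml, ml) ≤ Gfun a β z := hmax ⟨h.1, h.1⟩
    have : 0 < β * a * ml ^ 2 := by positivity
    linarith
  refine (hmax hm).trans ?_
  rcases hsub ⟨hz, hmax.localize⟩ with rfl | rfl | rfl | rfl
  · exact le_rfl
  · exact (Gfun_neg (mg, mg)).le
  · exact absurd (hanti hz) (lt_irrefl _)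
  · exact absurd (hanti (swap_mem_box hz)) (Gfun_swap (-ml, ml)).ge.not_gt

lemma lt_one_div_one_sub_sq_of_threshold_lt {t x : ℝ} (ha : a ∈ Ioo (-1 : ℝ) 1)
    (ht : t ∈ Ioo (0 : ℝ) 1) (hx : x ∈ Ioo (0 : ℝ) 1)
    (ht_eq : (1 - t ^ 2) * artanh t / t = (1 - a) / (1 + a))
    (hx_eq : artanh x = β / 2 * (1 - a) * x) (hβ : 2 / (1 - a) * (artanh t / t) < β) :
    β / 2 * (1 + a) < 1 / (1 - x ^ 2) := by
  have hsub : 0 < 1 - a := sub_pos.2 ha.2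
  have hadd : 0 < 1 + a := by linarith [ha.1]
  have hxk : artanh x / x = β / 2 * (1 - a) := by rw [hx_eq, mul_div_cancel_right₀ _ hx.1.ne']
  have htx : t < x := by
    refine (strictMonoOn_artanh_div.lt_iff_lt ht hx).1 ?_
    rw [hxk]
    rw [div_mul_eq_mul_div, div_lt_iff₀ hsub] at hβ
    linarith
  have hlt := strictAntiOn_one_sub_sq_mul_artanh_div ht hx htx
  dsimp only at hlt
  rw [ht_eq, mul_div_assoc, hxk, lt_div_iff₀ hadd] at hlt
  rw [lt_div_iff₀ (one_sub_sq_pos (Ioo_zero_one_subset hx))]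
  refine lt_of_mul_lt_mul_right ?_ hsub.le
  linarith

end

/-- for `α ∈ (0,1)` and `β > β*(α)`, `G_{α,β}` has exactly four local
maximizers on `[−1,1]²`: the global maximizers `±(m_g,m_g)` and the anti-symmetric local
maximizers `±(m_l,−m_l)`; at each of them the Hessian is negative definite. -/
theorem G_four_local_maximizers
    (α β tstar mg ml : ℝ) (hα : α ∈ Set.Ioo (0 : ℝ) 1)
    (ht : tstar ∈ Set.Ioo (0 : ℝ) 1)
    (hteq : (1 - tstar ^ 2) * arctanh tstar / tstar = (1 - α) / (1 + α))
    (hβ : (2 / (1 - α)) * (arctanh tstar / tstar) < β)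
    (hmg : 0 < mg) (hmgeq : mg = Real.tanh ((β / 2) * (1 + α) * mg))
    (hml : 0 < ml) (hmleq : ml = Real.tanh ((β / 2) * (1 - α) * ml)) :
    {m | m ∈ box ∧ IsLocalMaxOn (Gfun α β) box m} =
        {((mg, mg) : ℝ × ℝ), (-mg, -mg), (ml, -ml), (-ml, ml)} ∧
      (∀ m' ∈ box, Gfun α β m' ≤ Gfun α β (mg, mg)) ∧
      Gfun α β (-mg, -mg) = Gfun α β (mg, mg) ∧
      (-(hessG α β (mg, mg))).PosDef ∧ (-(hessG α β (-mg, -mg))).PosDef ∧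
      (-(hessG α β (ml, -ml))).PosDef ∧ (-(hessG α β (-ml, ml))).PosDef := by
  have hmg_mem : mg ∈ Set.Ioo (0 : ℝ) 1 := ⟨hmg, hmgeq.trans_lt (Real.tanh_lt_one _)⟩
  have hml_mem : ml ∈ Set.Ioo (0 : ℝ) 1 := ⟨hml, hmleq.trans_lt (Real.tanh_lt_one _)⟩
  have hmg_artanh := (congrArg Real.artanh hmgeq).trans (Real.artanh_tanh _)
  have hml_artanh := (congrArg Real.artanh hmleq).trans (Real.artanh_tanh _)
  rw [arctanh_eq_artanh (Ioo_zero_one_subset ht)] at hteq hβ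
  have hβ_pos : 0 < β := (mul_pos (div_pos two_pos (sub_pos.2 hα.2))
    (div_pos (Real.artanh_pos ht) ht.1)).trans hβ
  have hβα : 0 < β * α := mul_pos hβ_pos hα.1
  have hg_lt := lt_one_div_one_sub_sq_of_artanh_eq_mul hmg_mem hmg_artanh
  have hl_lt := lt_one_div_one_sub_sq_of_threshold_lt (Ioo_zero_one_subset hα) ht hml_mem hteq
    hml_artanh hβ
  have hg_pos : (-hessG α β (mg, mg)).PosDef := posDef_neg_hessG hβα.le hg_lt hg_lt
  have hl_pos : (-hessG α β (ml, -ml)).PosDef := posDef_neg_hessG hβα.le hl_lt (by rwa [neg_sq])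
  have hsub := setOf_isLocalMaxOn_Gfun_subset hmg_mem hmg_artanh hml_mem hml_artanh
  have hsup := subset_setOf_isLocalMaxOn_Gfun (Ioo_zero_one_subset hmg_mem) hmg_artanh hg_pos
    (Ioo_zero_one_subset hml_mem) hml_artanh hl_pos
  exact ⟨hsub.antisymm hsup,
    fun m' ↦ Gfun_le_Gfun_of_isLocalMaxOn_subset hβα hml.ne' hsub, Gfun_neg (mg, mg),
    hg_pos, posDef_neg_hessG hβα.le (by rwa [neg_sq]) (by rwa [neg_sq]),
    hl_pos, posDef_neg_hessG hβα.le (by rwa [neg_sq]) hl_lt⟩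

end
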